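/- arXiv:2311.09364 — 2 statements merged into one kernel-verified Lean document; each statement's English description precedes it below -/
import Mathlib

section
/- Every 2-connected outerplanar graph that is not a cycle has a compliant edge; moreover it has at least two edge-disjoint flat paths whose endpoints span compliant edges. -/
/-!
A longest cycle of a 2-connected graph without a subdivided `K_{2,3}` is Hamiltonian: a vertex off
the cycle gives an ear, which either replaces an arc of the cycle to form a longer one, or forms
with both arcs three long internally disjoint paths. If the graph is not a cycle, the Hamiltonian
cycle has a chord, and no two chords cross since there is no subdivided `K₄`. On each side of the
chord, an innermost chord cuts off an arc without further chords, that is, a flat path.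
-/

open SimpleGraph

universe u

/-- A flat (suspended) path: a path of length at least 2 all of whose internal
vertices have degree 2 in `G`. -/
def IsFlatPath {V : Type u} (G : SimpleGraph V) {x y : V} (p : G.Walk x y) : Prop :=
  p.IsPath ∧ 2 ≤ p.length ∧
    ∀ v ∈ p.support, v ≠ x → v ≠ y → (G.neighborSet v).ncard = 2

/-- An edge `xy` is compliant if `x` and `y` are also joined by a flat path. -/
def Compliant {V : Type u} (G : SimpleGraph V) (x y : V) : Prop :=
  G.Adj x y ∧ ∃ p : G.Walk x y, IsFlatPath G p

/-- A graph is 2-connected if it has at least 3 vertices and remains connected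
after deleting any single vertex. -/
def TwoConnected {V : Type u} (G : SimpleGraph V) : Prop :=
  3 ≤ Nat.card V ∧ ∀ v : V, ((⊤ : G.Subgraph).deleteVerts {v}).coe.Connected

/-- A (finite) graph is a cycle iff it is connected and 2-regular. -/
def IsCycleGraph {V : Type u} (G : SimpleGraph V) : Prop :=
  G.Connected ∧ ∀ v : V, (G.neighborSet v).ncard = 2

/-- Data exhibiting a subgraph of `G` which is a subdivision of `H`:
branch vertices are given by an injection `f`, and each edge of `H` is
replaced by a path in `G`, these paths being internally disjoint and their
internal vertices avoiding the branch vertices. -/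
structure SubdivisionIn {V : Type u} {W : Type*} (G : SimpleGraph V) (H : SimpleGraph W) where
  f : W → V
  inj : Function.Injective f
  path : ∀ ⦃u v : W⦄, H.Adj u v → G.Walk (f u) (f v)
  isPath : ∀ ⦃u v : W⦄ (h : H.Adj u v), (path h).IsPath
  internal_not_branch : ∀ ⦃u v : W⦄ (h : H.Adj u v), ∀ w ∈ (path h).support,
      (∃ z, w = f z) → w = f u ∨ w = f v
  internal_disjoint : ∀ ⦃u v u' v' : W⦄ (h : H.Adj u v) (h' : H.Adj u' v'),
      s(u, v) ≠ s(u', v') → ∀ w ∈ (path h).support, w ∈ (path h').support →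
        w = f u ∨ w = f v

/-- The vertices of the subdivided subgraph. -/
def SubdivisionIn.verts {V : Type u} {W : Type*} {G : SimpleGraph V} {H : SimpleGraph W}
    (D : SubdivisionIn G H) : Set V :=
  {w | ∃ (u v : W) (h : H.Adj u v), w ∈ (D.path h).support}

/-- `G` contains a subdivision of `H` as a subgraph. -/
def ContainsSubdivision {V : Type u} {W : Type*} (G : SimpleGraph V) (H : SimpleGraph W) : Prop :=
  Nonempty (SubdivisionIn G H)

/-- A graph is outerplanar iff it contains no subdivision of `K₄` or `K_{2,3}`
as a subgraph. -/
def Outerplanar {V : Type u} (G : SimpleGraph V) : Prop :=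
  ¬ ContainsSubdivision G (⊤ : SimpleGraph (Fin 4)) ∧
  ¬ ContainsSubdivision G (completeBipartiteGraph (Fin 2) (Fin 3))

section Subdivision

variable {V : Type u} {W : Type*} {G : SimpleGraph V} {H : SimpleGraph W}

/-- `x` and `y` are joined by a path of `G` all of whose internal vertices lie in `S`. -/
def JoinedThrough (G : SimpleGraph V) (S : Set V) (x y : V) : Prop :=
  ∃ p : G.Walk x y, p.IsPath ∧ ∀ w ∈ p.support, w = x ∨ w = y ∨ w ∈ S

theorem JoinedThrough.symm {S : Set V} {x y : V} (h : JoinedThrough G S x y) :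
    JoinedThrough G S y x := by
  obtain ⟨p, hp, hS⟩ := h
  exact ⟨p.reverse, hp.reverse, by grind [Walk.support_reverse]⟩

theorem joinedThrough_of_adj {x y : V} (h : G.Adj x y) (S : Set V) : JoinedThrough G S x y :=
  ⟨h.toWalk, by simp [h.ne], by simp +contextual⟩

theorem containsSubdivision_of_joinedThrough {f : W → V} (hf : Function.Injective f)
    {I : Sym2 W → Set V} (hI : Pairwise (Function.onFun Disjoint I)) (hfI : ∀ z e, f z ∉ I e)
    (hjoin : ∀ ⦃u v⦄, H.Adj u v → JoinedThrough G (I s(u, v)) (f u) (f v)) :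
    ContainsSubdivision G H := by
  choose p hp hpI using hjoin
  refine ⟨⟨f, hf, p, hp, ?_, ?_⟩⟩
  · rintro u v h w hw ⟨z, rfl⟩
    have := hpI h _ hw
    have := hfI z s(u, v)
    tauto
  · intro u v u' v' h h' hne w hw hw'
    by_contra! hends
    have hwI : w ∈ I s(u, v) := by simpa [hends] using hpI h w hw
    rcases hpI h' w hw' with rfl | rfl | hwI'
    · exact hfI _ _ hwI
    · exact hfI _ _ hwI
    · exact Set.disjoint_left.1 (hI hne) hwI hwI'

end Subdivision

section InternallyDisjoint

variable {V : Type u} {G : SimpleGraph V} {x y : V}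

/-- Two walks with the same endpoints are internally disjoint if they meet only in these
endpoints. -/
def InternallyDisjoint (p q : G.Walk x y) : Prop :=
  ∀ w ∈ p.support, w ∈ q.support → w = x ∨ w = y

theorem InternallyDisjoint.symm {p q : G.Walk x y} (h : InternallyDisjoint p q) :
    InternallyDisjoint q p :=
  fun w hq hp => h w hp hq

theorem InternallyDisjoint.isCycle_append_reverse {p q : G.Walk x y} (h : InternallyDisjoint p q)
    (hp : p.IsPath) (hq : q.IsPath) (hl : 1 < p.length ∨ 1 < q.length) :
    (p.append q.reverse).IsCycle := by
  refine hp.isCycle_append hq.reverse (fun w hw hw' => ?_) (by simpa using hl)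
  have hwx : w ≠ x := by grind [Walk.cons_tail_support, Walk.IsPath.support_nodup]
  have hwy : w ≠ y := by
    grind [Walk.cons_tail_support, Walk.IsPath.support_nodup, Walk.IsPath.reverse]
  have := h w (List.mem_of_mem_tail hw) (by simpa using List.mem_of_mem_tail hw')
  tauto

theorem exists_internallyDisjoint_of_isCycle {c : G.Walk x x} (hc : c.IsCycle)
    (hy : y ∈ c.support) (hxy : x ≠ y) :
    ∃ p q : G.Walk x y, p.IsPath ∧ q.IsPath ∧ InternallyDisjoint p q ∧
      p.length + q.length = c.length ∧ p.support ⊆ c.support ∧ q.support ⊆ c.support := by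
  obtain ⟨p, q, rfl⟩ := Walk.mem_support_iff_exists_append.1 hy
  refine ⟨p, q.reverse, hc.isPath_of_append_left (Walk.not_nil_of_ne hxy.symm),
    (hc.isPath_of_append_right (Walk.not_nil_of_ne hxy)).reverse, fun w hp hq => ?_, by simp,
    by simp, by simp⟩
  have hdisj : p.support.tail.Disjoint q.support.tail := by
    have := hc.support_nodup
    rw [Walk.tail_support_append] at this
    exact List.disjoint_of_nodup_append this
  rw [Walk.support_reverse, List.mem_reverse, Walk.mem_support_iff] at hq
  rw [Walk.mem_support_iff] at hp
  have := @hdisj w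
  tauto

theorem snd_ne_of_two_le_length {p : G.Walk x y} (hp : p.IsPath) (hl : 2 ≤ p.length) :
    p.snd ≠ y := fun h => by
  have := hp.getVert_injOn (by grind) (by grind) (h.trans p.getVert_length.symm)
  lia

theorem mem_support_tail_iff {p : G.Walk x y} (hp : p.IsPath) (hxy : x ≠ y) {w : V} :
    w ∈ p.tail.support ↔ w ∈ p.support ∧ w ≠ x := by
  rw [Walk.support_tail_of_not_nil _ (mt hp.nil_iff_eq.1 hxy)]
  grind [Walk.cons_tail_support, Walk.IsPath.support_nodup]

theorem joinedThrough_snd {p : G.Walk x y} (hp : p.IsPath) (hxy : x ≠ y) :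
    JoinedThrough G {w | w ∈ p.support ∧ w ≠ x ∧ w ≠ y ∧ w ≠ p.snd} p.snd y := by
  refine ⟨p.tail, hp.tail, fun w hw => ?_⟩
  have := (mem_support_tail_iff hp hxy).1 hw
  by_cases w = p.snd <;> by_cases w = y <;> simp_all

theorem containsSubdivision_completeBipartiteGraph_two_three {p : Fin 3 → G.Walk x y}
    (hp : ∀ i, (p i).IsPath) (hl : ∀ i, 2 ≤ (p i).length)
    (hd : Pairwise fun i j => InternallyDisjoint (p i) (p j)) :
    ContainsSubdivision G (completeBipartiteGraph (Fin 2) (Fin 3)) := by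
  have hnil (i) : ¬ (p i).Nil := by simpa [← Walk.length_eq_zero_iff] using by grind
  have hxy : x ≠ y := fun h => hnil 0 ((hp 0).nil_iff_eq.2 h)
  have hx (i) : G.Adj x (p i).snd := (p i).adj_snd (hnil i)
  have hy (i) : (p i).snd ≠ y := snd_ne_of_two_le_length (hp i) (hl i)
  have hsnd (i) : (p i).snd ∈ (p i).support := (p i).getVert_mem_support 1
  have hsnd_mem {i j} (h : (p i).snd ∈ (p j).support) : i = j := by
    by_contra hij
    exact (hd hij _ (hsnd i) h).elim (hx i).ne' (hy i)
  let f : Fin 2 ⊕ Fin 3 → V := Sum.elim ![x, y] fun i => (p i).snd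
  let I (e : Sym2 (Fin 2 ⊕ Fin 3)) : Set V :=
    {w | ∃ i, e = s(Sum.inl 1, Sum.inr i) ∧ w ∈ (p i).support ∧ w ≠ x ∧ w ≠ y ∧ w ≠ (p i).snd}
  have hf : Function.Injective f := by
    refine Function.Injective.sumElim ?_ ?_ ?_
    · simp [Function.Injective, Fin.forall_fin_two, hxy, hxy.symm]
    · exact fun i j (h : (p i).snd = (p j).snd) => hsnd_mem (h ▸ hsnd j)
    · simp [Fin.forall_fin_two, (hx _).ne, (hy _).symm]
  have hjoin : ∀ a i, JoinedThrough G (I s(Sum.inl a, Sum.inr i)) (f (Sum.inl a)) (f (Sum.inr i))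
    | 0, i => joinedThrough_of_adj (hx i) _
    | 1, i => by
      simpa [I, f] using (joinedThrough_snd (hp i) hxy).symm
  refine containsSubdivision_of_joinedThrough hf (I := I) (fun e e' he => ?_) ?_ ?_
  · refine Set.disjoint_left.2 ?_
    rintro w ⟨i, rfl, hi, hwx, hwy, -⟩ ⟨j, rfl, hj, -⟩
    exact (hd (by grind) w hi hj).elim hwx hwy
  · rintro (a | j) e ⟨i, -, hi, hwx, hwy, hwi⟩
    · match a with
      | 0 => exact hwx rfl
      | 1 => exact hwy rfl
    · exact hwi (hsnd_mem hi ▸ rfl)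
  · rintro (a | i) (b | j) h
    · simp at h
    · exact hjoin a j
    · exact Sym2.eq_swap ▸ (hjoin b i).symm
    · simp at h

end InternallyDisjoint

section CrossingChords

variable {V : Type u} {G : SimpleGraph V}

theorem containsSubdivision_top_four {f : Fin 4 → V} {p : ∀ i, G.Walk (f i) (f (i + 1))}
    (hp : ∀ i, (p i).IsPath) (hnil : ∀ i, ¬ (p i).Nil)
    (hd : Pairwise fun i j => (p i).support.tail.Disjoint (p j).support.tail)
    (hadj : ∀ i, G.Adj (f i) (f (i + 2))) :
    ContainsSubdivision G (⊤ : SimpleGraph (Fin 4)) := by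
  have hend (i) : f i ∈ (p (i - 1)).support.tail := by
    simpa only [sub_add_cancel] using Walk.end_mem_tail_support (hnil (i - 1))
  have htail {w i j} (hi : w ∈ (p i).support.tail) (hj : w ∈ (p j).support.tail) : i = j := by
    by_contra hij
    exact hd hij hi hj
  have hf : Function.Injective f := fun i j h =>
    sub_left_injective (htail (hend i) (h ▸ hend j))
  have hbranch {i z} (h : f z ∈ (p i).support) : z = i ∨ z = i + 1 := by
    rcases (p i).mem_support_iff.1 h with h | h
    · exact .inl (hf h)
    · exact .inr (sub_eq_iff_eq_add.1 (htail (hend z) h))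
  let I (e : Sym2 (Fin 4)) : Set V :=
    {w | ∃ i, e = s(i, i + 1) ∧ w ∈ (p i).support ∧ w ≠ f i ∧ w ≠ f (i + 1)}
  have harc (i) : JoinedThrough G (I s(i, i + 1)) (f i) (f (i + 1)) :=
    ⟨p i, hp i, fun w hw => by
      by_cases w = f i <;> by_cases w = f (i + 1) <;> grind⟩
  refine containsSubdivision_of_joinedThrough hf (I := I) (fun e e' he => ?_) ?_ ?_
  · refine Set.disjoint_left.2 ?_
    rintro w ⟨i, rfl, hi, hwi, -⟩ ⟨j, rfl, hj, hwj, -⟩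
    have := htail (((p i).mem_support_iff.1 hi).resolve_left hwi)
      (((p j).mem_support_iff.1 hj).resolve_left hwj)
    exact he (this ▸ rfl)
  · rintro z e ⟨i, -, hz, hzi, hzi'⟩
    exact (hbranch hz).elim (hzi <| congrArg f ·) (hzi' <| congrArg f ·)
  · intro u v huv
    have : v = u + 1 ∨ u = v + 1 ∨ v = u + 2 := by
      have := huv.ne
      lia
    rcases this with rfl | rfl | rfl
    · exact harc u
    · exact Sym2.eq_swap ▸ (harc v).symm
    · exact joinedThrough_of_adj (hadj u) _

theorem containsSubdivision_top_four_of_isCycle {a b c d : V} {p : G.Walk a b} {q : G.Walk b c}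
    {r : G.Walk c d} {s : G.Walk d a} (h : (p.append (q.append (r.append s))).IsCycle)
    (hab : a ≠ b) (hbc : b ≠ c) (hcd : c ≠ d) (hda : d ≠ a) (hac : G.Adj a c)
    (hbd : G.Adj b d) : ContainsSubdivision G (⊤ : SimpleGraph (Fin 4)) := by
  have hnodup := h.support_nodup
  simp only [Walk.tail_support_append, List.nodup_append', List.disjoint_append_right] at hnodup
  obtain ⟨-, ⟨-, ⟨-, -, hrs⟩, hqr, hqs⟩, hpq, hpr, hps⟩ := hnodup
  have hqrs := h.isPath_of_append_right (Walk.not_nil_of_ne hab)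
  let f : Fin 4 → V := ![a, b, c, d]
  let P : ∀ i, G.Walk (f i) (f (i + 1))
    | 0 => p
    | 1 => q
    | 2 => r
    | 3 => s
  refine containsSubdivision_top_four (p := P) ?_ ?_ ?_ ?_
  · rintro (i : Fin 4)
    fin_cases i
    · exact h.isPath_of_append_left (fun hn => Walk.not_nil_of_ne hbc (Walk.nil_append_iff.1 hn).1)
    · exact hqrs.of_append_left
    · exact hqrs.of_append_right.of_append_left
    · exact hqrs.of_append_right.of_append_right
  · intro i
    fin_cases i
    exacts [Walk.not_nil_of_ne hab, Walk.not_nil_of_ne hbc, Walk.not_nil_of_ne hcd,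
      Walk.not_nil_of_ne hda]
  · intro i j hij
    fin_cases i <;> fin_cases j <;> first
    | exact absurd rfl hij
    | assumption
    | exact List.Disjoint.symm (by assumption)
  · intro i
    fin_cases i
    exacts [hac, hbd, hac.symm, hbd.symm]

end CrossingChords

section TwoConnected

variable {V : Type u} {G : SimpleGraph V}

theorem TwoConnected.finite (h : TwoConnected G) : Finite V :=
  Nat.finite_of_card_ne_zero (by have := h.1; lia)

theorem TwoConnected.exists_ne_ne (h : TwoConnected G) (a b : V) : ∃ w, w ≠ a ∧ w ≠ b := by
  classical
  have := h.finite
  have := Fintype.ofFinite V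
  have hcard : ({a, b} : Finset V).card < Fintype.card V :=
    Finset.card_le_two.trans_lt (Nat.card_eq_fintype_card (α := V) ▸ h.1)
  simpa using Finset.exists_mem_notMem_of_card_lt_card (t := Finset.univ) hcard

theorem TwoConnected.exists_walk_notMem_support (h : TwoConnected G) {a b v : V} (ha : a ≠ v)
    (hb : b ≠ v) : ∃ p : G.Walk a b, v ∉ p.support := by
  obtain ⟨p⟩ := (h.2 v).preconnected ⟨a, by simpa using ha⟩ ⟨b, by simpa using hb⟩
  refine ⟨p.map (Subgraph.hom _), fun hv => ?_⟩
  obtain ⟨w, -, hwv⟩ := List.mem_map.1 (Walk.support_map _ p ▸ hv)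
  exact w.2.2 hwv

theorem TwoConnected.connected (h : TwoConnected G) : G.Connected := by
  have : Nonempty V := Nat.card_pos_iff.1 (by have := h.1; lia) |>.1
  refine ⟨fun a b => ?_⟩
  obtain ⟨v, hva, hvb⟩ := h.exists_ne_ne a b
  exact ⟨(h.exists_walk_notMem_support hva.symm hvb.symm).choose⟩

theorem TwoConnected.not_isAcyclic (h : TwoConnected G) : ¬ G.IsAcyclic := fun hG => by
  classical
  have := h.finite
  have := Fintype.ofFinite V
  have : Nontrivial V := Finite.one_lt_card_iff_nontrivial.1 (by have := h.1; lia)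
  obtain ⟨u, hu⟩ := (IsTree.mk h.connected hG).exists_vert_degree_one_of_nontrivial
  obtain ⟨a, hua, ha⟩ := degree_eq_one_iff_existsUnique_adj.1 hu
  obtain ⟨w, hwu, hwa⟩ := h.exists_ne_ne u a
  obtain ⟨p, hp⟩ := h.exists_walk_notMem_support hua.ne hwa
  have : p.snd = a := ha _ (p.adj_snd (Walk.not_nil_of_ne hwu.symm))
  exact hp (this ▸ p.getVert_mem_support 1)

theorem exists_isCycle_forall_isCycle_length_le_length [Finite V] (hG : ¬ G.IsAcyclic) :
    ∃ (x : V) (c : G.Walk x x), c.IsCycle ∧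
      ∀ (x' : V) (c' : G.Walk x' x'), c'.IsCycle → c'.length ≤ c.length := by
  have := Fintype.ofFinite V
  let s := {n | ∃ (x : V) (c : G.Walk x x), c.IsCycle ∧ c.length = n}
  have hs : s.Finite := (Set.finite_le_nat (Fintype.card V)).subset <| by
    rintro _ ⟨x, c, hc, rfl⟩
    have := hc.isPath_tail.length_lt
    have := c.length_tail_add_one hc.not_nil
    simp only [Set.mem_ofPred_eq]
    lia
  simp only [IsAcyclic, not_forall, not_not] at hG
  obtain ⟨x₀, c₀, hc₀⟩ := hG
  obtain ⟨_, ⟨x, c, hc, rfl⟩, hmax⟩ := hs.exists_maximal ⟨_, x₀, c₀, hc₀, rfl⟩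
  refine ⟨x, c, hc, fun x' c' hc' => ?_⟩
  have := hmax ⟨x', c', hc', rfl⟩
  lia

theorem TwoConnected.exists_ear (h : TwoConnected G) {S : Finset V} {x y v : V} (hy : y ∈ S)
    (hyx : y ≠ x) (hv : v ∉ S) (hxv : G.Adj x v) :
    ∃ z ∈ S, z ≠ x ∧ ∃ E : G.Walk x z, E.IsPath ∧ 2 ≤ E.length ∧
      ∀ w ∈ E.support, w ∈ S → w = x ∨ w = z := by
  classical
  obtain ⟨p, hp⟩ := h.exists_walk_notMem_support hxv.ne' hyx
  obtain ⟨z, hzS, hz, hfirst⟩ := p.exists_mem_support_forall_mem_support_imp_eq S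
    ⟨y, Finset.mem_filter.2 ⟨hy, p.end_mem_support⟩⟩
  set q := (p.takeUntil z hz).bypass
  have hsub : q.support ⊆ (p.takeUntil z hz).support := Walk.support_bypass_subset_support _
  have hxq : x ∉ q.support := fun hx => hp (p.support_takeUntil_subset_support hz (hsub hx))
  have hvz : v ≠ z := fun hvz => hv (hvz ▸ hzS)
  refine ⟨z, hzS, fun hzx => hxq (hzx ▸ q.end_mem_support), Walk.cons hxv q,
    (Walk.bypass_isPath _).cons hxq, ?_, fun w hw hwS => ?_⟩
  · have := Walk.not_nil_iff_lt_length.1 (Walk.not_nil_of_ne (p := q) hvz)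
    rw [Walk.length_cons]
    lia
  · rcases List.mem_cons.1 (Walk.support_cons .. ▸ hw) with rfl | hw
    · exact .inl rfl
    · exact .inr (hfirst w hwS (hsub hw))

theorem TwoConnected.exists_isCycle_length_lt_of_adj (h : TwoConnected G)
    (hK : ¬ ContainsSubdivision G (completeBipartiteGraph (Fin 2) (Fin 3))) {x v : V}
    {c : G.Walk x x} (hc : c.IsCycle) (hv : v ∉ c.support) (hxv : G.Adj x v) :
    ∃ (x' : V) (c' : G.Walk x' x'), c'.IsCycle ∧ c.length < c'.length := by
  classical
  obtain ⟨z, hz, hzx, E, hE, hEl, hEc⟩ := h.exists_ear (S := c.support.toFinset) (y := c.snd)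
    (by simp) (c.adj_snd hc.not_nil).ne' (by simpa using hv) hxv
  simp only [List.mem_toFinset] at hz hEc
  obtain ⟨A, B, hA, hB, hAB, hl, hAc, hBc⟩ := exists_internallyDisjoint_of_isCycle hc hz hzx.symm
  have hEA : InternallyDisjoint E A := fun w hw hwA => hEc w hw (hAc hwA)
  have hEB : InternallyDisjoint E B := fun w hw hwB => hEc w hw (hBc hwB)
  by_cases hAl : A.length < 2
  · refine ⟨x, _, hEB.isCycle_append_reverse hE hB (.inl hEl), ?_⟩
    rw [Walk.length_append, Walk.length_reverse]
    lia
  by_cases hBl : B.length < 2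
  · refine ⟨x, _, hEA.isCycle_append_reverse hE hA (.inl hEl), ?_⟩
    rw [Walk.length_append, Walk.length_reverse]
    lia
  refine absurd (containsSubdivision_completeBipartiteGraph_two_three (p := ![A, B, E])
    ?_ ?_ ?_) hK
  · simp [Fin.forall_fin_succ, *]
  · simpa [Fin.forall_fin_succ] using ⟨not_lt.1 hAl, not_lt.1 hBl, hEl⟩
  · intro i j hij
    fin_cases i <;> fin_cases j <;> first
    | exact absurd rfl hij
    | assumption
    | exact InternallyDisjoint.symm (by assumption)

theorem TwoConnected.exists_isCycle_forall_mem_support (h : TwoConnected G)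
    (hK : ¬ ContainsSubdivision G (completeBipartiteGraph (Fin 2) (Fin 3))) :
    ∃ (x : V) (c : G.Walk x x), c.IsCycle ∧ ∀ v, v ∈ c.support := by
  classical
  have := h.finite
  obtain ⟨x, c, hc, hmax⟩ := exists_isCycle_forall_isCycle_length_le_length h.not_isAcyclic
  refine ⟨x, c, hc, ?_⟩
  by_contra! ⟨v, hv⟩
  obtain ⟨p⟩ := h.connected x v
  obtain ⟨d, -, hd, hd'⟩ := p.exists_boundary_dart {w | w ∈ c.support} c.start_mem_support hv
  obtain ⟨x', c', hc', hlt⟩ := h.exists_isCycle_length_lt_of_adj hK (hc.rotate hd)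
    (v := d.snd) (by simpa using hd') d.adj
  have := hmax x' c' hc'
  rw [Walk.length_rotate] at hlt
  lia

end TwoConnected

section Chords

variable {V : Type u} {G : SimpleGraph V} {x y z w : V}

theorem isCycle_append_comm {p : G.Walk x y} {q : G.Walk y x} :
    (p.append q).IsCycle ↔ (q.append p).IsCycle := by
  simp only [Walk.isCycle_def, Walk.isTrail_def, Walk.edges_append, Walk.tail_support_append,
    List.nodup_append_comm (l₁ := p.edges), List.nodup_append_comm (l₁ := p.support.tail), ne_eq,
    Walk.eq_nil_iff_nil, Walk.nil_append_iff, and_comm (a := p.Nil)]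

theorem two_le_length_of_notMem_edges {p : G.Walk x y} (hxy : x ≠ y) (h : s(x, y) ∉ p.edges) :
    2 ≤ p.length := by
  cases p with
  | nil => exact absurd rfl hxy
  | cons hadj p =>
    cases p with
    | nil => simp at h
    | cons => simp

theorem exists_adj_notMem_edges_of_isCycle {c : G.Walk x x} (hc : c.IsCycle)
    (hz : z ∈ c.support) (hdeg : (G.neighborSet z).ncard ≠ 2) :
    ∃ w, G.Adj z w ∧ s(z, w) ∉ c.edges := by
  by_contra! h
  refine hdeg (hc.ncard_neighborSet_toSubgraph_eq_two hz ▸ congrArg Set.ncard ?_)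
  ext w
  exact ⟨fun hw => Walk.adj_toSubgraph_iff_mem_edges.2 (h w hw), fun hw => hw.adj_sub⟩

theorem mem_support_of_adj_of_isCycle_append
    (hK : ¬ ContainsSubdivision G (⊤ : SimpleGraph (Fin 4))) {p : G.Walk x y} {q : G.Walk y x}
    (hc : (p.append q).IsCycle) (hxy : G.Adj x y) (hz : z ∈ p.support) (hzx : z ≠ x)
    (hzy : z ≠ y) (hw : w ∈ (p.append q).support) (hzw : G.Adj z w) : w ∈ p.support := by
  by_contra hwp
  have hwq : w ∈ q.support := ((Walk.mem_support_append_iff ..).1 hw).resolve_left hwp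
  have hwx : w ≠ x := by rintro rfl; exact hwp p.start_mem_support
  have hwy : w ≠ y := by rintro rfl; exact hwp p.end_mem_support
  obtain ⟨p₁, p₂, rfl⟩ := Walk.mem_support_iff_exists_append.1 hz
  obtain ⟨q₁, q₂, rfl⟩ := Walk.mem_support_iff_exists_append.1 hwq
  rw [← Walk.append_assoc] at hc
  exact hK (containsSubdivision_top_four_of_isCycle hc hzx.symm hzy hwy.symm hwx hxy hzw)

theorem exists_eq_append_append_of_mem_support {p : G.Walk x y} (hz : z ∈ p.support)
    (hw : w ∈ p.support) :
    ∃ (u v : V) (p₁ : G.Walk x u) (p₂ : G.Walk u v) (p₃ : G.Walk v y),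
      s(u, v) = s(z, w) ∧ p = p₁.append (p₂.append p₃) := by
  obtain ⟨p₁, p₂, rfl⟩ := Walk.mem_support_iff_exists_append.1 hz
  rcases (Walk.mem_support_append_iff ..).1 hw with hw | hw
  · obtain ⟨p₃, p₄, rfl⟩ := Walk.mem_support_iff_exists_append.1 hw
    exact ⟨w, z, p₃, p₄, p₂, Sym2.eq_swap, (Walk.append_assoc ..).symm⟩
  · obtain ⟨p₃, p₄, rfl⟩ := Walk.mem_support_iff_exists_append.1 hw
    exact ⟨z, w, p₁, p₃, p₄, rfl, rfl⟩

theorem exists_isFlatPath_of_isCycle_append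
    (hK : ¬ ContainsSubdivision G (⊤ : SimpleGraph (Fin 4))) {p : G.Walk x y} {q : G.Walk y x}
    (hc : (p.append q).IsCycle) (hspan : ∀ v, v ∈ (p.append q).support) (hxy : G.Adj x y)
    (hl : 2 ≤ p.length) :
    ∃ (u v : V) (r : G.Walk u v), IsFlatPath G r ∧ G.Adj u v ∧ r.edges ⊆ p.edges := by
  induction hn : p.length using Nat.strong_induction_on generalizing x y with
  | _ n ih =>
  by_cases hflat : IsFlatPath G p
  · exact ⟨x, y, p, hflat, hxy, List.Subset.refl _⟩
  obtain ⟨z, hz, hzx, hzy, hdeg⟩ :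
      ∃ z ∈ p.support, z ≠ x ∧ z ≠ y ∧ (G.neighborSet z).ncard ≠ 2 := by
    by_contra! h
    exact hflat ⟨hc.isPath_of_append_left (Walk.not_nil_of_ne hxy.ne'), hl, h⟩
  obtain ⟨w, hzw, hzwc⟩ := exists_adj_notMem_edges_of_isCycle hc (hspan z) hdeg
  have hw : w ∈ p.support :=
    mem_support_of_adj_of_isCycle_append hK hc hxy hz hzx hzy (hspan w) hzw
  obtain ⟨u, v, p₁, p₂, p₃, huv, rfl⟩ := exists_eq_append_append_of_mem_support hz hw
  have huv_adj : G.Adj u v := by rwa [← mem_edgeSet, huv]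
  have hlt : p₂.length < n := by
    by_contra! hle
    simp only [Walk.length_append] at hn
    have hxu : x = u := p₁.eq_of_length_eq_zero (by lia)
    have hvy : v = y := p₃.eq_of_length_eq_zero (by lia)
    grind
  have hspan' (t) : t ∈ (p₂.append (p₃.append (q.append p₁))).support := by
    have := hspan t
    simp only [Walk.mem_support_append_iff] at this ⊢
    tauto
  have hchord : s(u, v) ∉ p₂.edges := fun h => hzwc (by simp [← huv, h])
  have hc' : (p₂.append (p₃.append (q.append p₁))).IsCycle := by
    rw [← Walk.append_assoc, isCycle_append_comm] at hc
    simpa only [Walk.append_assoc] using hc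
  obtain ⟨a, b, r, hr, hab, hsub⟩ := ih _ hlt hc' hspan' huv_adj
    (two_le_length_of_notMem_edges huv_adj.ne hchord) rfl
  exact ⟨a, b, r, hr, hab, List.Subset.trans hsub (by simp)⟩

theorem exists_isCycle_append_adj_of_not_isCycleGraph (hG : G.Connected) (hnc : ¬ IsCycleGraph G)
    {c : G.Walk x x} (hc : c.IsCycle) (hspan : ∀ v, v ∈ c.support) :
    ∃ (y z : V) (p : G.Walk y z) (q : G.Walk z y), (p.append q).IsCycle ∧
      (∀ v, v ∈ (p.append q).support) ∧ G.Adj y z ∧ 2 ≤ p.length ∧ 2 ≤ q.length := by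
  classical
  obtain ⟨y, hy⟩ : ∃ y, (G.neighborSet y).ncard ≠ 2 := by
    by_contra! h
    exact hnc ⟨hG, h⟩
  have hc' := hc.rotate (hspan y)
  have hspan' : ∀ v, v ∈ (c.rotate y (hspan y)).support := by simpa using hspan
  obtain ⟨z, hyz, hchord⟩ := exists_adj_notMem_edges_of_isCycle hc' (hspan' y) hy
  obtain ⟨p, q, hpq⟩ := Walk.mem_support_iff_exists_append.1 (hspan' z)
  rw [hpq] at hc' hspan' hchord
  simp only [Walk.edges_append, List.mem_append, not_or] at hchord
  exact ⟨y, z, p, q, hc', hspan', hyz, two_le_length_of_notMem_edges hyz.ne hchord.1,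
    two_le_length_of_notMem_edges hyz.ne' (Sym2.eq_swap ▸ hchord.2)⟩

end Chords

/-- Every 2-connected outerplanar graph that is not a cycle has a compliant edge;
moreover it has at least two edge-disjoint flat paths whose endpoints span
compliant edges. -/
theorem stmt0 {V : Type u} [Finite V] (G : SimpleGraph V)
    (h2 : TwoConnected G) (hop : Outerplanar G) (hnc : ¬ IsCycleGraph G) :
    (∃ x y : V, Compliant G x y) ∧
    ∃ (x y u v : V) (p : G.Walk x y) (q : G.Walk u v),
      IsFlatPath G p ∧ IsFlatPath G q ∧
      (∀ e ∈ p.edges, e ∉ q.edges) ∧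
      Compliant G x y ∧ Compliant G u v := by
  obtain ⟨t, c, hc, hspan⟩ := h2.exists_isCycle_forall_mem_support hop.2
  obtain ⟨a, b, p, q, hpq, hspan', hab, hp, hq⟩ :=
    exists_isCycle_append_adj_of_not_isCycleGraph h2.connected hnc hc hspan
  obtain ⟨x, y, r, hr, hxy, hrp⟩ := exists_isFlatPath_of_isCycle_append hop.1 hpq hspan' hab hp
  obtain ⟨u, v, s, hs, huv, hsq⟩ := exists_isFlatPath_of_isCycle_append hop.1
    (isCycle_append_comm.1 hpq) (fun w => by simpa [or_comm] using hspan' w) hab.symm hq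
  have hdisj : p.edges.Disjoint q.edges :=
    List.disjoint_of_nodup_append (Walk.edges_append p q ▸ hpq.edges_nodup)
  exact ⟨⟨x, y, hxy, r, hr⟩, x, y, u, v, r, s, hr, hs, fun e her hes => hdisj (hrp her) (hsq hes),
    ⟨hxy, r, hr⟩, ⟨huv, s, hs⟩⟩
end

section
/- If G is a 2-connected graph that is not outerplanar and x, y are any two (not necessarily adjacent) vertices of G, then G contains a subgraph which is a subdivision of K_4 or of K_{2,3} containing both x and y. -/
open SimpleGraph

universe u

/-!
Take a maximal cycle `C` through `x` and `y`. If `C` misses a vertex of `G`, it has an ear; by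
maximality neither arc of `C` between the ends of the ear is a single edge, so the two arcs and the
ear form a subdivision of `K_{2,3}` containing `C`.

If `C` is Hamiltonian, cut it open into a linear order of the vertices. Some two edges of `G` cross
in this order, and together with `C` they form a subdivision of `K₄` containing every vertex:
if no two edges crossed, then the ends of a path could never be separated by the two ends of a
path disjoint from it, which rules out every subdivision of `K₄` or `K_{2,3}` and makes `G`
outerplanar.
-/

open Set

variable {V : Type u} {G : SimpleGraph V}

/-- `S` is the vertex set of a path of `G` from `a` to `b`. Paths are recorded by their vertex sets
because disjointness and covering are all that matters for subdivisions. -/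
def PathOn (G : SimpleGraph V) (a b : V) (S : Set V) : Prop :=
  ∃ p : G.Walk a b, p.IsPath ∧ {w | w ∈ p.support} = S

/-- `C` is the vertex set of a cycle of `G`. -/
def CycleOn (G : SimpleGraph V) (C : Set V) : Prop :=
  ∃ (a : V) (c : G.Walk a a), c.IsCycle ∧ {w | w ∈ c.support} = C

/-- `Q` is the vertex set of an ear of `C`: a path between two distinct vertices `u`, `v` of `C`
which leaves `C` and meets it only at its ends. -/
structure IsEar (G : SimpleGraph V) (C : Set V) (u v : V) (Q : Set V) : Prop where
  pathOn : PathOn G u v Q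
  ne : u ≠ v
  left_mem : u ∈ C
  right_mem : v ∈ C
  inter_subset : Q ∩ C ⊆ {u, v}
  not_subset : ¬ Q ⊆ C

section PathOn

variable {a b c w : V} {S T C : Set V}

theorem PathOn.left_mem (h : PathOn G a b S) : a ∈ S := by
  obtain ⟨p, -, rfl⟩ := h
  exact p.start_mem_support

theorem PathOn.right_mem (h : PathOn G a b S) : b ∈ S := by
  obtain ⟨p, -, rfl⟩ := h
  exact p.end_mem_support

theorem PathOn.symm (h : PathOn G a b S) : PathOn G b a S := by
  obtain ⟨p, hp, rfl⟩ := h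
  exact ⟨p.reverse, hp.reverse, by simp⟩

theorem pathOn_pair (h : G.Adj a b) : PathOn G a b {a, b} :=
  ⟨h.toWalk, by simp [h.ne], by ext; simp⟩

theorem PathOn.trans (hS : PathOn G a b S) (hT : PathOn G b c T) (hST : S ∩ T ⊆ {b}) :
    PathOn G a c (S ∪ T) := by
  obtain ⟨p, hp, rfl⟩ := hS
  obtain ⟨q, hq, rfl⟩ := hT
  refine ⟨p.append q, ?_, by ext; simp [Walk.mem_support_append_iff]⟩
  have hq' := hq.support_nodup
  rw [← q.cons_tail_support, List.nodup_cons] at hq'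
  rw [Walk.isPath_def, Walk.support_append, List.nodup_append']
  refine ⟨hp.support_nodup, hq'.2, fun w hwp hwq => hq'.1 ?_⟩
  have hwb : w = b := hST ⟨hwp, List.mem_of_mem_tail hwq⟩
  exact hwb ▸ hwq

theorem PathOn.trans_adj {d : V} (hS : PathOn G a b S) (hbc : G.Adj b c) (hT : PathOn G c d T)
    (hST : Disjoint S T) : PathOn G a d (S ∪ T) := by
  have hbT := disjoint_left.mp hST hS.right_mem
  have hcS := disjoint_right.mp hST hT.left_mem
  have hbcT : PathOn G b d ({b, c} ∪ T) := (pathOn_pair hbc).trans hT (by grind)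
  have hunion : S ∪ ({b, c} ∪ T) = S ∪ T := by grind [hS.right_mem, hT.left_mem]
  exact hunion ▸ hS.trans hbcT (by grind)

theorem PathOn.exists_split (h : PathOn G a b S) (hw : w ∈ S) :
    ∃ S₁ S₂, PathOn G a w S₁ ∧ PathOn G w b S₂ ∧ S₁ ∪ S₂ = S ∧ S₁ ∩ S₂ ⊆ {w} := by
  obtain ⟨p, hp, rfl⟩ := h
  obtain ⟨q, r, hq, hr, rfl⟩ := hp.mem_support_iff_exists_append.mp hw
  refine ⟨_, _, ⟨q, hq, rfl⟩, ⟨r, hr, rfl⟩, by ext; simp [Walk.mem_support_append_iff], ?_⟩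
  rintro t ⟨htq, htr⟩
  by_contra htw
  exact hp.ne_of_mem_support_of_append htw htq htr rfl

theorem exists_pathOn_inter_eq_singleton (p : G.Walk a b) (hb : b ∈ C) :
    ∃ w S, PathOn G a w S ∧ S ∩ C = {w} ∧ S ⊆ {t | t ∈ p.support} := by
  classical
  obtain ⟨w, hwC, hw, hfirst⟩ := p.bypass.exists_mem_support_forall_mem_support_imp_eq
    {t ∈ p.bypass.support.toFinset | t ∈ C} ⟨b, by simp [hb]⟩
  have hsub := p.bypass.support_takeUntil_subset_support hw
  refine ⟨w, _, ⟨p.bypass.takeUntil w hw, p.bypass_isPath.takeUntil hw, rfl⟩, ?_,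
    fun t ht => p.support_bypass_subset_support (hsub ht)⟩
  ext t
  constructor
  · rintro ⟨ht, htC⟩
    exact hfirst t (by simpa using ⟨hsub ht, htC⟩) ht
  · rintro rfl
    exact ⟨Walk.end_mem_support _, (by simpa using hwC : _ ∧ _).2⟩

end PathOn

section CycleOn

variable {u v x : V} {S T C Q : Set V}

theorem PathOn.cycleOn_union (hS : PathOn G u v S) (hT : PathOn G u v T) (huv : u ≠ v)
    (hST : S ∩ T ⊆ {u, v}) (hS' : ¬ S ⊆ {u, v}) : CycleOn G (S ∪ T) := by
  obtain ⟨p, hp, rfl⟩ := hS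
  obtain ⟨q, hq, rfl⟩ := hT
  refine ⟨u, p.append q.reverse, hp.isCycle_append hq.reverse ?_ (.inl ?_),
    by ext; simp [Walk.mem_support_append_iff]⟩
  · intro t htp htq
    rcases hST ⟨List.mem_of_mem_tail htp, by simpa using List.mem_of_mem_tail htq⟩ with rfl | rfl
    · have := hp.support_nodup
      rw [← p.cons_tail_support, List.nodup_cons] at this
      exact this.1 htp
    · have := hq.reverse.support_nodup
      rw [← q.reverse.cons_tail_support, List.nodup_cons] at this
      exact this.1 htq
  · by_contra! hlen
    apply hS'
    intro t ht
    cases p with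
    | nil => exact (huv rfl).elim
    | cons h p =>
      cases p with
      | nil => simpa using ht
      | cons => simp at hlen

theorem CycleOn.exists_split (hC : CycleOn G C) (hu : u ∈ C) (hv : v ∈ C) (huv : u ≠ v) :
    ∃ S T, PathOn G u v S ∧ PathOn G u v T ∧ S ∪ T = C ∧ S ∩ T ⊆ {u, v} := by
  classical
  obtain ⟨a, c, hc, rfl⟩ := hC
  have hd := hc.rotate hu
  have hv' : v ∈ (c.rotate u hu).support := by simpa using hv
  obtain ⟨p, q, hpq⟩ := Walk.mem_support_iff_exists_append.mp hv'
  rw [hpq] at hd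
  refine ⟨_, _, ⟨p, hd.isPath_of_append_left (Walk.not_nil_of_ne huv.symm), rfl⟩,
    PathOn.symm ⟨q, hd.isPath_of_append_right (Walk.not_nil_of_ne huv), rfl⟩, ?_, ?_⟩
  · ext t
    rw [mem_ofPred_eq, ← c.mem_support_rotate_iff u hu, hpq]
    simp [Walk.mem_support_append_iff]
  · rintro t ⟨htp, htq⟩
    have hnodup := hd.support_nodup
    rw [Walk.tail_support_append, List.nodup_append'] at hnodup
    have := hnodup.2.2
    rcases p.mem_support_iff.mp htp with rfl | htp'
    · exact .inl rfl
    · rcases q.mem_support_iff.mp htq with rfl | htq'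
      · exact .inr rfl
      · exact (this htp' htq').elim

theorem CycleOn.nontrivial (hC : CycleOn G C) : C.Nontrivial := by
  obtain ⟨a, c, hc, rfl⟩ := hC
  have hadj := c.adj_snd hc.not_nil
  exact ⟨a, c.start_mem_support, c.snd, c.getVert_mem_support 1, hadj.ne⟩

theorem CycleOn.exists_adj_pathOn (hC : CycleOn G C) : ∃ a b, G.Adj a b ∧ PathOn G a b C := by
  obtain ⟨a, c, hc, rfl⟩ := hC
  refine ⟨a, c.snd, c.adj_snd hc.not_nil, PathOn.symm ⟨c.tail, hc.isPath_tail, ?_⟩⟩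
  ext t
  have := c.tail.end_mem_support
  have := c.support_tail_of_not_nil hc.not_nil
  have := c.cons_tail_support
  grind

theorem IsEar.cycleOn_union (hQ : IsEar G C u v Q) (hT : PathOn G u v T) (hTC : T ⊆ C) :
    CycleOn G (Q ∪ T) := by
  refine hQ.pathOn.cycleOn_union hT hQ.ne ((inter_subset_inter_right Q hTC).trans hQ.inter_subset)
    fun h => hQ.not_subset (h.trans ?_)
  exact pair_subset hQ.left_mem hQ.right_mem

theorem CycleOn.exists_cycleOn_of_isEar (hC : CycleOn G C) (hQ : IsEar G C u v Q) (hx : x ∈ C) :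
    ∃ C', CycleOn G C' ∧ x ∈ C' ∧ Q ⊆ C' := by
  obtain ⟨S, T, hS, hT, rfl, -⟩ := hC.exists_split hQ.left_mem hQ.right_mem hQ.ne
  rcases hx with hx | hx
  · exact ⟨Q ∪ S, hQ.cycleOn_union hS subset_union_left, .inr hx, subset_union_left⟩
  · exact ⟨Q ∪ T, hQ.cycleOn_union hT subset_union_right, .inr hx, subset_union_left⟩

end CycleOn

section TwoConnected

variable {x y z : V} {C : Set V}

theorem TwoConnected.pair_ne_univ (h : TwoConnected G) (x y : V) : ({x, y} : Set V) ≠ univ := by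
  intro hxy
  have hcard := ncard_insert_le x {y}
  rw [hxy, ncard_univ, ncard_singleton] at hcard
  have := h.1
  omega

theorem TwoConnected.exists_walk_notMem_support_s7 (h : TwoConnected G) (hx : x ≠ z) (hy : y ≠ z) :
    ∃ p : G.Walk x y, z ∉ p.support := by
  obtain ⟨p⟩ := (h.2 z).preconnected ⟨x, by simpa using hx⟩ ⟨y, by simpa using hy⟩
  refine ⟨p.map (Subgraph.hom _), fun hz : z ∈ (p.map (Subgraph.hom _)).support => ?_⟩
  rw [Walk.support_map] at hz
  obtain ⟨w, -, hwz⟩ := List.mem_map.mp hz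
  exact w.2.2 hwz

theorem TwoConnected.preconnected (h : TwoConnected G) : G.Preconnected := by
  intro x y
  obtain ⟨t, ht⟩ := (ne_univ_iff_exists_notMem _).mp (h.pair_ne_univ x y)
  simp only [mem_insert_iff, mem_singleton_iff, not_or] at ht
  obtain ⟨p, -⟩ := h.exists_walk_notMem_support_s7 (Ne.symm ht.1) (Ne.symm ht.2)
  exact p.reachable

theorem TwoConnected.exists_isEar_of_adj (h : TwoConnected G) (hC : C.Nontrivial) (hx : x ∈ C)
    (hy : y ∉ C) (hxy : G.Adj x y) : ∃ v Q, IsEar G C x v Q ∧ y ∈ Q := by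
  obtain ⟨c, hc, hcx⟩ := hC.exists_ne x
  obtain ⟨p, hp⟩ := h.exists_walk_notMem_support_s7 hxy.ne' hcx
  obtain ⟨v, S, hS, hSC, hSp⟩ := exists_pathOn_inter_eq_singleton p hc
  have hxS : x ∉ S := fun hxS => hp (hSp hxS)
  have hv : v ∈ S ∩ C := hSC ▸ mem_singleton v
  refine ⟨v, {x, y} ∪ S, ⟨(pathOn_pair hxy).trans hS ?_, ?_, hx, hv.2, ?_, ?_⟩, .inl (.inr rfl)⟩
  · rintro t ⟨rfl | rfl, ht⟩
    · exact (hxS ht).elim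
    · rfl
  · rintro rfl
    exact hxS hv.1
  · rintro t ⟨(rfl | rfl) | ht, htC⟩
    · exact .inl rfl
    · exact (hy htC).elim
    · exact .inr (hSC ▸ ⟨ht, htC⟩)
  · exact fun hsub => hy (hsub (.inl (.inr rfl)))

theorem TwoConnected.exists_isEar (h : TwoConnected G) (hC : C.Nontrivial) (hC' : C ≠ univ) :
    ∃ u v Q, IsEar G C u v Q := by
  obtain ⟨x, hx⟩ := hC.nonempty
  obtain ⟨y, hy⟩ := (ne_univ_iff_exists_notMem C).mp hC'
  obtain ⟨p⟩ := h.preconnected x y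
  obtain ⟨d, -, hdC, hdC'⟩ := p.exists_boundary_dart C hx hy
  obtain ⟨v, Q, hQ, -⟩ := h.exists_isEar_of_adj hC hdC hdC' d.adj
  exact ⟨d.fst, v, Q, hQ⟩

theorem TwoConnected.exists_cycleOn_of_adj (h : TwoConnected G) (hxy : G.Adj x y) :
    ∃ C, CycleOn G C ∧ x ∈ C ∧ y ∈ C := by
  obtain ⟨u, v, Q, hQ⟩ := h.exists_isEar (nontrivial_pair hxy.ne) (h.pair_ne_univ x y)
  have huv : ({x, y} : Set V) = {u, v} ∧ G.Adj u v := by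
    have := hQ.ne
    rcases hQ.left_mem with rfl | rfl <;> rcases hQ.right_mem with rfl | rfl
    · contradiction
    · exact ⟨rfl, hxy⟩
    · exact ⟨pair_comm _ _, hxy.symm⟩
    · contradiction
  have hpair : PathOn G u v {x, y} := huv.1 ▸ pathOn_pair huv.2
  exact ⟨_, hQ.cycleOn_union hpair Subset.rfl, .inr (.inl rfl), .inr (.inr rfl)⟩

theorem TwoConnected.exists_cycleOn (h : TwoConnected G) (x y : V) :
    ∃ C, CycleOn G C ∧ x ∈ C ∧ y ∈ C := by
  obtain ⟨p⟩ := h.preconnected y x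
  induction p with
  | @nil x =>
    obtain ⟨t, ht⟩ := (ne_univ_iff_exists_notMem _).mp (h.pair_ne_univ x x)
    have : Nontrivial V := ⟨x, t, fun hxt => ht (.inl hxt.symm)⟩
    obtain ⟨z, hz⟩ := h.preconnected.exists_adj_of_nontrivial x
    obtain ⟨C, hC, hx, -⟩ := h.exists_cycleOn_of_adj hz
    exact ⟨C, hC, hx, hx⟩
  | @cons y z x hyz _ ih =>
    obtain ⟨C, hC, hx, hz⟩ := ih
    by_cases hy : y ∈ C
    · exact ⟨C, hC, hx, hy⟩
    · obtain ⟨v, Q, hQ, hyQ⟩ := h.exists_isEar_of_adj hC.nontrivial hz hy hyz.symm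
      obtain ⟨C', hC', hx', hQC'⟩ := hC.exists_cycleOn_of_isEar hQ hx
      exact ⟨C', hC', hx', hQC' hyQ⟩

end TwoConnected

section Subdivision

theorem SubdivisionIn.disjoint_support {W : Type*} {H : SimpleGraph W} (D : SubdivisionIn G H)
    {u v u' v' : W} (h : H.Adj u v) (h' : H.Adj u' v') (huu' : u ≠ u') (huv' : u ≠ v')
    (hvu' : v ≠ u') (hvv' : v ≠ v') : (D.path h).support.Disjoint (D.path h').support := by
  intro w hw hw'
  have hne : s(u, v) ≠ s(u', v') := by simp [huu', huv']
  rcases D.internal_disjoint h h' hne w hw hw' with rfl | rfl <;>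
    rcases D.internal_not_branch h' _ hw' ⟨_, rfl⟩ with heq | heq
  exacts [huu' (D.inj heq), huv' (D.inj heq), hvu' (D.inj heq), hvv' (D.inj heq)]

theorem exists_subdivisionIn_of_pathOn {W ι : Type*} {H : SimpleGraph W} {f : W → V}
    (hf : Function.Injective f) {src tgt : ι → W} {S : ι → Set V}
    (hinj : Function.Injective fun i => s(src i, tgt i))
    (hrange : range (fun i => s(src i, tgt i)) = H.edgeSet)
    (hpath : ∀ i, PathOn G (f (src i)) (f (tgt i)) (S i))
    (hbranch : ∀ i z, f z ∈ S i → z ∈ s(src i, tgt i))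
    (hdisj : Pairwise fun i j => S i ∩ S j ⊆ range f) :
    ∃ D : SubdivisionIn G H, ∀ i, S i ⊆ D.verts := by
  have hedge : ∀ u v, H.Adj u v → ∃ (p : G.Walk (f u) (f v)) (i : ι),
      s(src i, tgt i) = s(u, v) ∧ p.IsPath ∧ {w | w ∈ p.support} = S i := by
    intro u v huv
    obtain ⟨i, hi⟩ : s(u, v) ∈ range fun i => s(src i, tgt i) := hrange ▸ huv
    obtain ⟨p, hp, hpS⟩ : PathOn G (f u) (f v) (S i) := by
      rcases Sym2.eq_iff.mp hi with ⟨rfl, rfl⟩ | ⟨rfl, rfl⟩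
      · exact hpath i
      · exact (hpath i).symm
    exact ⟨p, i, hi, hp, hpS⟩
  choose path idx hidx hpath hsupp using hedge
  have hends : ∀ u v (huv : H.Adj u v) w, w ∈ (path u v huv).support → w ∈ range f →
      w = f u ∨ w = f v := by
    rintro u v huv _ hw ⟨z, rfl⟩
    have hz := hbranch (idx u v huv) z ((hsupp u v huv).subset hw)
    rw [hidx, Sym2.mem_iff] at hz
    exact hz.imp (congrArg f) (congrArg f)
  let D : SubdivisionIn G H :=
    { f := f
      inj := hf
      path := path
      isPath := hpath
      internal_not_branch := fun u v huv w hw ⟨z, hz⟩ => hends u v huv w hw ⟨z, hz.symm⟩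
      internal_disjoint := fun u v u' v' huv huv' hne w hw hw' => by
        have hidx_ne : idx u v huv ≠ idx u' v' huv' := fun h => hne <| by
          rw [← hidx u v huv, ← hidx u' v' huv', h]
        exact hends u v huv w hw
          (hdisj hidx_ne ⟨(hsupp u v huv).subset hw, (hsupp u' v' huv').subset hw'⟩) }
  refine ⟨D, fun i w hw => ?_⟩
  have hadj : H.Adj (src i) (tgt i) := hrange.subset ⟨i, rfl⟩
  have hi : idx _ _ hadj = i := hinj (hidx _ _ hadj)
  exact ⟨_, _, hadj, ((hsupp _ _ hadj).trans (congrArg S hi)).superset hw⟩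

theorem exists_subdivisionIn_completeBipartiteGraph {κ ι : Type*} {f : κ ⊕ ι → V}
    (hf : Function.Injective f) {S : κ → ι → Set V}
    (hpath : ∀ k i, PathOn G (f (.inl k)) (f (.inr i)) (S k i))
    (hleft : ∀ k i l, f (.inl l) ∈ S k i → l = k) (hright : ∀ k i j, f (.inr j) ∈ S k i → j = i)
    (hdisj : Pairwise fun e e' : κ × ι => S e.1 e.2 ∩ S e'.1 e'.2 ⊆ range f) :
    ∃ D : SubdivisionIn G (completeBipartiteGraph κ ι), ∀ k i, S k i ⊆ D.verts := by
  obtain ⟨D, hD⟩ := exists_subdivisionIn_of_pathOn (H := completeBipartiteGraph κ ι) hf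
    (src := fun e : κ × ι => .inl e.1) (tgt := fun e => .inr e.2)
    (fun e e' h => by simpa [Prod.ext_iff] using h)
    (by ext e; induction e with | _ x y; rcases x with k | i <;> rcases y with l | j <;> simp)
    (fun e => hpath e.1 e.2)
    (by rintro ⟨k, i⟩ (l | j) h; exacts [by simp [hleft k i l h], by simp [hright k i j h]])
    hdisj
  exact ⟨D, fun k i => hD (k, i)⟩

theorem exists_subdivisionIn_of_theta {ι : Type*} {a b : V} (hab : a ≠ b)
    {S : ι → Set V} (hS : ∀ i, PathOn G a b (S i)) (hdisj : Pairwise fun i j => S i ∩ S j ⊆ {a, b})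
    (hinner : ∀ i, ¬ S i ⊆ {a, b}) :
    ∃ D : SubdivisionIn G (completeBipartiteGraph (Fin 2) ι), ∀ i, S i ⊆ D.verts := by
  choose t htS ht using fun i => not_subset.mp (hinner i)
  choose S₁ S₂ hS₁ hS₂ hunion hinter using fun i => (hS i).exists_split (htS i)
  let f : Fin 2 ⊕ ι → V := Sum.elim ![a, b] t
  let T : Fin 2 → ι → Set V := ![S₁, S₂]
  have hTS : ∀ k i, T k i ⊆ S i :=
    Fin.forall_fin_two.mpr ⟨fun i => hunion i ▸ subset_union_left,
      fun i => hunion i ▸ subset_union_right⟩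
  have htt : ∀ i j, t i ∈ S j → i = j := fun i j hi => by
    by_contra hij
    exact ht i (hdisj hij ⟨htS i, hi⟩)
  have hf : Function.Injective f := by
    refine Function.Injective.sumElim ?_ (fun i j h => htt i j (h ▸ htS j)) fun k i h => ht i ?_
    · simpa [Function.Injective, Fin.forall_fin_two, hab] using hab.symm
    · fin_cases k
      exacts [.inl h.symm, .inr h.symm]
  have hpath : ∀ k i, PathOn G (f (.inl k)) (f (.inr i)) (T k i) :=
    Fin.forall_fin_two.mpr ⟨hS₁, fun i => (hS₂ i).symm⟩
  have hleft : ∀ k i l, f (.inl l) ∈ T k i → l = k := by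
    intro k i l hl
    fin_cases k <;> fin_cases l
    · rfl
    · exact (ht i (.inr (hinter i ⟨hl, (hS₂ i).right_mem⟩).symm)).elim
    · exact (ht i (.inl (hinter i ⟨(hS₁ i).left_mem, hl⟩).symm)).elim
    · rfl
  have hTdisj : Pairwise fun e e' : Fin 2 × ι => T e.1 e.2 ∩ T e'.1 e'.2 ⊆ range f := by
    rintro ⟨k, i⟩ ⟨l, j⟩ hne w ⟨hw, hw'⟩
    by_cases hij : i = j
    · subst hij
      refine ⟨.inr i, (hinter i ?_ : w = t i).symm⟩
      fin_cases k <;> fin_cases l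
      exacts [(hne rfl).elim, ⟨hw, hw'⟩, ⟨hw', hw⟩, (hne rfl).elim]
    · rcases hdisj hij ⟨hTS _ _ hw, hTS _ _ hw'⟩ with rfl | rfl
      exacts [⟨.inl 0, rfl⟩, ⟨.inl 1, rfl⟩]
  obtain ⟨D, hD⟩ := exists_subdivisionIn_completeBipartiteGraph hf hpath hleft
    (fun k i j hj => htt j i (hTS k i hj)) hTdisj
  exact ⟨D, fun i => hunion i ▸ union_subset (hD 0 i) (hD 1 i)⟩

theorem exists_subdivisionIn_K23_of_isEar {C Q : Set V} {u v : V} (hC : Maximal (CycleOn G) C)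
    (hQ : IsEar G C u v Q) :
    ∃ D : SubdivisionIn G (completeBipartiteGraph (Fin 2) (Fin 3)), C ⊆ D.verts := by
  obtain ⟨S, T, hS, hT, rfl, hST⟩ := hC.prop.exists_split hQ.left_mem hQ.right_mem hQ.ne
  have hinner : ∀ {A B}, PathOn G u v B → A ∪ B = S ∪ T → ¬ A ⊆ {u, v} := by
    intro A B hB hAB hsub
    have hcycle := hQ.cycleOn_union hB (hAB ▸ subset_union_right)
    have hle : S ∪ T ⊆ Q ∪ B := by
      rw [← hAB]
      refine union_subset_union_left _ (hsub.trans ?_)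
      exact pair_subset hQ.pathOn.left_mem hQ.pathOn.right_mem
    exact hQ.not_subset (subset_union_left.trans (hC.le_of_ge hcycle hle))
  have hQS : Q ∩ S ⊆ {u, v} := (inter_subset_inter_right Q subset_union_left).trans hQ.inter_subset
  have hQT : Q ∩ T ⊆ {u, v} := (inter_subset_inter_right Q subset_union_right).trans hQ.inter_subset
  obtain ⟨D, hD⟩ := exists_subdivisionIn_of_theta (G := G) hQ.ne (S := ![Q, S, T])
    (by simp [Fin.forall_fin_succ, hQ.pathOn, hS, hT])
    (by simp [Pairwise, Fin.forall_fin_succ, hQS, hQT, hST, inter_comm S Q, inter_comm T])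
    (by
      simp only [Fin.forall_fin_succ]
      exact ⟨fun h => hQ.not_subset (h.trans (pair_subset hQ.left_mem hQ.right_mem)),
        hinner hT rfl, hinner hS (union_comm _ _), nofun⟩)
  exact ⟨D, union_subset (hD 1) (hD 2)⟩

end Subdivision

section UIoo

variable {α : Type*} [LinearOrder α] {a b c d x : α}

theorem mem_uIoo : x ∈ uIoo a b ↔ a < x ∧ x < b ∨ b < x ∧ x < a := by
  simp only [uIoo, mem_Ioo]
  grind

theorem mem_uIoo_iff_comm (hac : a ≠ c) (had : a ≠ d) (hbc : b ≠ c) (hbd : b ≠ d) :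
    (a ∈ uIoo c d ↔ b ∈ uIoo c d) ↔ (c ∈ uIoo a b ↔ d ∈ uIoo a b) := by
  simp only [mem_uIoo]
  grind

/-- Of the three ways to pair up four distinct points of a line, exactly one is crossing, and the
last two hypotheses exclude the pairings of `a` with `c` and of `a` with `d`. -/
theorem mem_uIoo_iff_notMem_uIoo (hab : a ≠ b) (hac : a ≠ c) (had : a ≠ d) (hbc : b ≠ c)
    (hbd : b ≠ d) (hcd : c ≠ d) (h : a ∈ uIoo b d ↔ c ∈ uIoo b d)
    (h' : a ∈ uIoo b c ↔ d ∈ uIoo b c) : c ∈ uIoo a b ↔ d ∉ uIoo a b := by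
  simp only [mem_uIoo] at *
  grind

end UIoo

section Noncrossing

variable [LinearOrder V] {a b c d : V}

/-- No two edges of `G` cross when its vertices are placed on a line in the given order and its
edges are drawn as arcs above that line. -/
def Noncrossing (G : SimpleGraph V) : Prop :=
  ∀ ⦃p₀ p₁ p₂ p₃ : V⦄, p₀ < p₁ → p₁ < p₂ → p₂ < p₃ → G.Adj p₀ p₂ → ¬ G.Adj p₁ p₃

theorem Noncrossing.mem_uIoo_iff_of_adj (hG : Noncrossing G) (hab : G.Adj a b) (hcd : G.Adj c d)
    (hac : a ≠ c) (had : a ≠ d) (hbc : b ≠ c) (hbd : b ≠ d) : a ∈ uIoo c d ↔ b ∈ uIoo c d := by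
  simp only [mem_uIoo]
  grind [Noncrossing, G.adj_comm]

theorem Noncrossing.mem_uIoo_iff_of_adj_of_walk (hG : Noncrossing G) (p : G.Walk a b)
    (hcd : G.Adj c d) (hc : c ∉ p.support) (hd : d ∉ p.support) :
    a ∈ uIoo c d ↔ b ∈ uIoo c d := by
  induction p with
  | nil => rfl
  | cons hab p ih =>
    rw [Walk.support_cons, List.mem_cons, not_or] at hc hd
    have hstart := p.start_mem_support
    rw [← ih hc.2 hd.2]
    exact hG.mem_uIoo_iff_of_adj hab hcd (Ne.symm hc.1) (Ne.symm hd.1)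
      (ne_of_mem_of_not_mem hstart hc.2) (ne_of_mem_of_not_mem hstart hd.2)

theorem Noncrossing.mem_uIoo_iff_of_walk (hG : Noncrossing G) (p : G.Walk a b) (q : G.Walk c d)
    (hpq : p.support.Disjoint q.support) : a ∈ uIoo c d ↔ b ∈ uIoo c d := by
  induction p with
  | nil => rfl
  | cons hab p ih =>
    rw [Walk.support_cons, List.disjoint_cons_left] at hpq
    have hb := hpq.2 p.start_mem_support
    rw [← ih hpq.2, mem_uIoo_iff_comm (ne_of_mem_of_not_mem q.start_mem_support hpq.1).symm
      (ne_of_mem_of_not_mem q.end_mem_support hpq.1).symm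
      (ne_of_mem_of_not_mem q.start_mem_support hb).symm
      (ne_of_mem_of_not_mem q.end_mem_support hb).symm]
    exact hG.mem_uIoo_iff_of_adj_of_walk q hab hpq.1 hb

section Branch

variable {W : Type*} {H : SimpleGraph W} {u v x y : W}

theorem Noncrossing.branch_mem_uIoo_iff (hG : Noncrossing G) (D : SubdivisionIn G H)
    (hux : H.Adj u x) (hvy : H.Adj v y) (huv : u ≠ v) (huy : u ≠ y) (hxv : x ≠ v) (hxy : x ≠ y) :
    D.f u ∈ uIoo (D.f v) (D.f y) ↔ D.f x ∈ uIoo (D.f v) (D.f y) :=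
  hG.mem_uIoo_iff_of_walk (D.path hux) (D.path hvy)
    (D.disjoint_support hux hvy huv huy hxv hxy)

theorem Noncrossing.branch_mem_uIoo_iff_notMem (hG : Noncrossing G) (D : SubdivisionIn G H)
    (hux : H.Adj u x) (huy : H.Adj u y) (hvx : H.Adj v x) (hvy : H.Adj v y)
    (huv : u ≠ v) (hxy : x ≠ y) :
    D.f x ∈ uIoo (D.f u) (D.f v) ↔ D.f y ∉ uIoo (D.f u) (D.f v) :=
  mem_uIoo_iff_notMem_uIoo (D.inj.ne huv) (D.inj.ne hux.ne) (D.inj.ne huy.ne) (D.inj.ne hvx.ne)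
    (D.inj.ne hvy.ne) (D.inj.ne hxy)
    (hG.branch_mem_uIoo_iff D hux hvy huv huy.ne hvx.ne' hxy)
    (hG.branch_mem_uIoo_iff D huy hvx huv hux.ne hvy.ne' hxy.symm)

theorem Noncrossing.outerplanar (hG : Noncrossing G) : Outerplanar G := by
  refine ⟨fun ⟨D⟩ => ?_, fun ⟨D⟩ => ?_⟩
  · have h23 := hG.branch_mem_uIoo_iff D (u := 2) (x := 3) (v := 0) (y := 1)
      (by simp) (by simp) (by simp) (by simp) (by simp) (by simp)
    have h23' := hG.branch_mem_uIoo_iff_notMem D (u := 0) (v := 1) (x := 2) (y := 3)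
      (by simp) (by simp) (by simp) (by simp) (by simp) (by simp)
    tauto
  · have hsep : ∀ i j, i ≠ j → (D.f (.inr i) ∈ uIoo (D.f (.inl 0)) (D.f (.inl 1)) ↔
        D.f (.inr j) ∉ uIoo (D.f (.inl 0)) (D.f (.inl 1))) := fun i j hij =>
      hG.branch_mem_uIoo_iff_notMem D (by simp) (by simp) (by simp) (by simp) (by simp)
        (by simpa using hij)
    have h01 := hsep 0 1 (by simp)
    have h02 := hsep 0 2 (by simp)
    have h12 := hsep 1 2 (by simp)
    tauto

end Branch

end Noncrossing

section Hamiltonian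

theorem pathOn_image_getVert {a b : V} {p : G.Walk a b} (hp : p.IsPath) {m n : ℕ} (hmn : m ≤ n)
    (hn : n ≤ p.length) : PathOn G (p.getVert m) (p.getVert n) (p.getVert '' Icc m n) := by
  have hend : (p.drop m).getVert (n - m) = p.getVert n := by
    rw [Walk.drop_getVert, Nat.add_sub_cancel' hmn]
  refine ⟨((p.drop m).take (n - m)).copy rfl hend, by simpa using (hp.drop m).take (n - m), ?_⟩
  ext w
  simp only [Walk.support_copy, mem_ofPred_eq, Walk.mem_support_iff_exists_getVert,
    Walk.take_getVert, Walk.drop_getVert, Walk.take_length, Walk.drop_length, mem_image, mem_Icc]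
  constructor
  · rintro ⟨k, rfl, -⟩
    exact ⟨m + (n - m) ⊓ k, by omega, rfl⟩
  · rintro ⟨k, hk, rfl⟩
    exact ⟨k - m, by congr 1; omega, by omega⟩

theorem PathOn.exists_linearOrder {a b : V} (h : PathOn G a b univ) :
    ∃ _ : LinearOrder V, IsBot a ∧ IsTop b ∧ ∀ u v, u ≤ v → PathOn G u v (Icc u v) := by
  classical
  obtain ⟨p, hp, hsupp⟩ := h
  have hmem : ∀ v, v ∈ p.support := fun v => hsupp.superset (mem_univ v)
  let pos : V → ℕ := fun v => p.support.idxOf v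
  have hget : ∀ v, p.getVert (pos v) = v := fun v => p.getVert_support_idxOf (hmem v)
  have hpos_le : ∀ v, pos v ≤ p.length := fun v => by
    have hlt := List.idxOf_lt_length_of_mem (hmem v)
    rwa [p.length_support, Nat.lt_succ_iff] at hlt
  have hpos : ∀ n ≤ p.length, pos (p.getVert n) = n := fun n hn =>
    hp.getVert_injOn (hpos_le _) hn (hget _)
  let _ : LinearOrder V := LinearOrder.lift' pos (Function.LeftInverse.injective hget)
  have hle : ∀ u v : V, u ≤ v ↔ pos u ≤ pos v := fun _ _ => Iff.rfl
  refine ⟨inferInstance, fun v => ?_, fun v => ?_, fun u v huv => ?_⟩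
  · rw [hle, ← p.getVert_zero, hpos 0 (Nat.zero_le _)]
    exact Nat.zero_le _
  · rw [hle, ← p.getVert_length, hpos _ le_rfl]
    exact hpos_le v
  · have hIcc : p.getVert '' Icc (pos u) (pos v) = Icc u v := by
      ext w
      constructor
      · rintro ⟨n, hn, rfl⟩
        rwa [mem_Icc, hle, hle, hpos n (hn.2.trans (hpos_le v))]
      · exact fun hw => ⟨pos w, hw, hget w⟩
    simpa only [hget, hIcc] using pathOn_image_getVert hp huv (hpos_le v)

theorem CycleOn.exists_linearOrder (hC : CycleOn G univ) :
    ∃ _ : LinearOrder V, ∀ u v, u < v → PathOn G u v (Icc u v) ∧ PathOn G u v (Iic u ∪ Ici v) := by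
  obtain ⟨a, b, hab, hpath⟩ := hC.exists_adj_pathOn
  obtain ⟨_, ha, hb, hIcc⟩ := hpath.exists_linearOrder
  have hIic : ∀ u, Icc a u = Iic u := fun u => inter_eq_right.mpr fun w _ => ha w
  have hIci : ∀ v, Icc v b = Ici v := fun v => inter_eq_left.mpr fun w _ => hb w
  refine ⟨inferInstance, fun u v huv => ⟨hIcc u v huv.le, ?_⟩⟩
  have hdisj : Disjoint (Iic u) (Ici v) :=
    disjoint_left.mpr fun w hwu hvw => (lt_of_le_of_lt hwu huv).not_ge hvw
  exact (hIic u ▸ (hIcc a u (ha u)).symm).trans_adj hab (hIci v ▸ (hIcc v b (hb v)).symm) hdisj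

theorem exists_subdivisionIn_K4_of_crossing [LinearOrder V]
    (hcycle : ∀ u v, u < v → PathOn G u v (Icc u v) ∧ PathOn G u v (Iic u ∪ Ici v))
    {p : Fin 4 → V} (hp : StrictMono p) (h02 : G.Adj (p 0) (p 2)) (h13 : G.Adj (p 1) (p 3)) :
    ∃ D : SubdivisionIn G (⊤ : SimpleGraph (Fin 4)), ∀ w, w ∈ D.verts := by
  let src : Fin 6 → Fin 4 := ![0, 1, 2, 0, 0, 1]
  let tgt : Fin 6 → Fin 4 := ![1, 2, 3, 3, 2, 3]
  let S : Fin 6 → Set V := ![Icc (p 0) (p 1), Icc (p 1) (p 2), Icc (p 2) (p 3),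
    Iic (p 0) ∪ Ici (p 3), {p 0, p 2}, {p 1, p 3}]
  let arc : V → Fin 6 := fun w =>
    if w ≤ p 0 then 3 else if w ≤ p 1 then 0 else if w ≤ p 2 then 1 else if w ≤ p 3 then 2 else 3
  obtain ⟨h01, h12, h23⟩ : p 0 < p 1 ∧ p 1 < p 2 ∧ p 2 < p 3 := by
    simpa [Fin.strictMono_iff_lt_succ, Fin.forall_fin_succ] using hp
  have hpath : ∀ i, PathOn G (p (src i)) (p (tgt i)) (S i) := by
    intro i
    fin_cases i
    exacts [(hcycle _ _ h01).1, (hcycle _ _ h12).1, (hcycle _ _ h23).1,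
      (hcycle _ _ (h01.trans (h12.trans h23))).2, pathOn_pair h02, pathOn_pair h13]
  have hbranch : ∀ i z, p z ∈ S i → z ∈ s(src i, tgt i) := by
    intro i z
    fin_cases i <;> fin_cases z <;> simp [S, src, tgt, hp.le_iff_le, hp.injective.eq_iff]
  have harc : ∀ w, w ∈ S (arc w) := by
    intro w
    dsimp only [arc]
    split_ifs with h0 h1 h2 h3
    exacts [.inl h0, ⟨le_of_not_ge h0, h1⟩, ⟨le_of_not_ge h1, h2⟩, ⟨le_of_not_ge h2, h3⟩,
      .inr (le_of_not_ge h3)]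
  have harc_unique : ∀ i, ∀ w ∈ S i, w ∉ range p → i = arc w := by
    intro i w hi hw
    have hne : ∀ k, p k ≠ w := by simpa using hw
    match i, hi with
    | 0, (hw' : p 0 ≤ w ∧ w ≤ p 1) => grind
    | 1, (hw' : p 1 ≤ w ∧ w ≤ p 2) => grind
    | 2, (hw' : p 2 ≤ w ∧ w ≤ p 3) => grind
    | 3, (hw' : w ≤ p 0 ∨ p 3 ≤ w) => grind
    | 4, (hw' : w = p 0 ∨ w = p 2) => grind
    | 5, (hw' : w = p 1 ∨ w = p 3) => grind
  have hdisj : Pairwise fun i j => S i ∩ S j ⊆ range p := by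
    rintro i j hij w ⟨hi, hj⟩
    by_contra hw
    exact hij ((harc_unique i w hi hw).trans (harc_unique j w hj hw).symm)
  have hedge : ∀ x y, (∃ i, s(src i, tgt i) = s(x, y)) ↔ x ≠ y := by decide
  obtain ⟨D, hD⟩ := exists_subdivisionIn_of_pathOn (H := (⊤ : SimpleGraph (Fin 4))) hp.injective
    (by decide) (Set.ext (Sym2.ind hedge)) hpath hbranch hdisj
  exact ⟨D, fun w => hD _ (harc w)⟩

theorem CycleOn.exists_subdivisionIn_K4 (hC : CycleOn G univ) (hG : ¬ Outerplanar G) :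
    ∃ D : SubdivisionIn G (⊤ : SimpleGraph (Fin 4)), ∀ w, w ∈ D.verts := by
  obtain ⟨_, hcycle⟩ := hC.exists_linearOrder
  have hcross : ¬ Noncrossing G := fun h => hG h.outerplanar
  simp only [Noncrossing, not_forall, not_not] at hcross
  obtain ⟨p₀, p₁, p₂, p₃, h01, h12, h23, h02, h13⟩ := hcross
  have hp : StrictMono ![p₀, p₁, p₂, p₃] := by
    simp [Fin.strictMono_iff_lt_succ, Fin.forall_fin_succ, h01, h12, h23]
  exact exists_subdivisionIn_K4_of_crossing hcycle hp h02 h13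

end Hamiltonian

/-- If `G` is 2-connected and not outerplanar, then any two vertices `x`, `y`
lie together in a subgraph of `G` which is a subdivision of `K₄` or of `K_{2,3}`. -/
theorem stmt7 {V : Type u} [Finite V] (G : SimpleGraph V)
    (h2 : TwoConnected G) (hnop : ¬ Outerplanar G) (x y : V) :
    (∃ D : SubdivisionIn G (⊤ : SimpleGraph (Fin 4)), x ∈ D.verts ∧ y ∈ D.verts) ∨
    (∃ D : SubdivisionIn G (completeBipartiteGraph (Fin 2) (Fin 3)),
      x ∈ D.verts ∧ y ∈ D.verts) := by
  obtain ⟨C₀, hC₀, hx, hy⟩ := h2.exists_cycleOn x y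
  obtain ⟨C, hle, hC⟩ := {C | CycleOn G C}.toFinite.exists_le_maximal hC₀
  by_cases huniv : C = univ
  · obtain ⟨D, hD⟩ := (huniv ▸ hC.prop : CycleOn G univ).exists_subdivisionIn_K4 hnop
    exact .inl ⟨D, hD x, hD y⟩
  · obtain ⟨u, v, Q, hQ⟩ := h2.exists_isEar hC.prop.nontrivial huniv
    obtain ⟨D, hD⟩ := exists_subdivisionIn_K23_of_isEar hC hQ
    exact .inr ⟨D, hD (hle hx), hD (hle hy)⟩
end
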